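/- arXiv:1506.03205 — 3 statements merged into one kernel-verified Lean document; each statement's English description precedes it below -/
import Mathlib

section
/- Let (X,d) be a compact metric space and 𝓜 = {d_λ}_{λ∈Λ} an increasing family of distances on X. Assume: (1) there exist positive constants A and m such that for every sufficiently small ε > 0, X admits a covering by closed d-balls of radius ε of cardinality at most A·ε^{-m}; and (2) there are constants a, b ≥ 0 with d_λ(x,y) ≤ e^{aλ+b}·d(x,y) for all λ ∈ Λ and all x,y ∈ X. Then h(𝓜,X) ≤ m·a. -/
open Filter Topology
open scoped ENNReal NNReal

variable {X : Type*}

/-- `ρ` is a metric on `X`. -/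
def IsMetric (ρ : X → X → ℝ) : Prop :=
  (∀ x y, ρ x y = 0 ↔ x = y) ∧ (∀ x y, ρ x y = ρ y x) ∧ ∀ x y z, ρ x z ≤ ρ x y + ρ y z

/-- `M(ρ,ε)`: the minimal number of closed `ρ`-balls of radius `ε` needed to cover `X`. -/
noncomputable def coverNum (ρ : X → X → ℝ) (ε : ℝ) : ℕ∞ :=
  sInf {n : ℕ∞ | ∃ s : Finset X, (s.card : ℕ∞) = n ∧ ∀ x : X, ∃ c ∈ s, ρ c x ≤ ε}

/-- extended logarithm on `ℕ∞`, with values in `[0,∞]`. -/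
noncomputable def elog (n : ℕ∞) : ℝ≥0∞ :=
  if n = ⊤ then ⊤ else ENNReal.ofReal (Real.log (n.toNat : ℝ))

/-- entropy of a family of distances: `sup_{ε>0} limsup_{λ→∞} (1/λ) log M(d_λ,ε)`. -/
noncomputable def entropy (d : ℝ≥0 → X → X → ℝ) : ℝ≥0∞ :=
  ⨆ (ε : ℝ) (_ : 0 < ε),
    Filter.limsup (fun r : ℝ≥0 => elog (coverNum (d r) ε) / (r : ℝ≥0∞)) Filter.atTop

/-- an increasing family of distances: each `d_λ` is a metric and `d_λ ≤ d_λ'` for `λ ≤ λ'`. -/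
def IsIncreasingFamily (d : ℝ≥0 → X → X → ℝ) : Prop :=
  (∀ r, IsMetric (d r)) ∧ ∀ ⦃r s : ℝ≥0⦄, r ≤ s → ∀ x y, d r x y ≤ d s x y

/-! If `d_λ ≤ e^{aλ+b} ρ`, a closed `ρ`-ball of radius `δ = ε e^{-(aλ+b)}` lies in the closed
`d_λ`-ball of radius `ε` with the same centre, so `M(d_λ,ε) ≤ M(ρ,δ) ≤ A δ^{-m}`. Hence
`log M(d_λ,ε)` is bounded by an affine function of `λ` with slope `m a`; dividing by `λ`, only the
slope survives in the limit. -/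

theorem coverNum_le_card {ρ : X → X → ℝ} {ε : ℝ} {s : Finset X}
    (hs : ∀ x, ∃ c ∈ s, ρ c x ≤ ε) : coverNum ρ ε ≤ s.card :=
  sInf_le ⟨s, rfl, hs⟩

theorem coverNum_le_coverNum {ρ σ : X → X → ℝ} {δ ε : ℝ}
    (h : ∀ x y, ρ x y ≤ δ → σ x y ≤ ε) : coverNum σ ε ≤ coverNum ρ δ := by
  refine sInf_le_sInf ?_
  rintro n ⟨s, hcard, hs⟩
  refine ⟨s, hcard, fun x => ?_⟩
  obtain ⟨c, hc, hcx⟩ := hs x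
  exact ⟨c, hc, h c x hcx⟩

theorem coverNum_antitone (ρ : X → X → ℝ) : Antitone (coverNum ρ) :=
  fun _ _ hδε => coverNum_le_coverNum fun _ _ hxy => hxy.trans hδε

theorem coverNum_le_coverNum_div {ρ σ : X → X → ℝ} {K : ℝ} (hK : 0 < K)
    (h : ∀ x y, σ x y ≤ K * ρ x y) (ε : ℝ) : coverNum σ ε ≤ coverNum ρ (ε / K) :=
  coverNum_le_coverNum fun x y hxy => (h x y).trans ((le_div_iff₀' hK).1 hxy)

theorem elog_natCast (n : ℕ) : elog n = ENNReal.ofReal (Real.log n) := by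
  simp [elog]

theorem elog_natCast_le_ofReal_log {n : ℕ} {B : ℝ} (h : (n : ℝ) ≤ B) :
    elog n ≤ ENNReal.ofReal (Real.log B) := by
  rw [elog_natCast]
  rcases n.eq_zero_or_pos with rfl | hn
  · simp
  · exact ENNReal.ofReal_le_ofReal (Real.log_le_log (Nat.cast_pos.2 hn) h)

theorem elog_mono : Monotone elog := by
  intro k n hkn
  cases n with
  | top => simp [elog]
  | coe n =>
    lift k to ℕ using ne_top_of_le_ne_top (ENat.natCast_ne_top n) hkn
    rw [elog_natCast n]
    exact elog_natCast_le_ofReal_log (Nat.cast_le.2 (Nat.cast_le.1 hkn))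

theorem elog_coverNum_le_of_card_le_mul_rpow {ρ : X → X → ℝ} {A m ε : ℝ} (hA : 0 < A)
    (hε : 0 < ε) {s : Finset X} (hcard : (s.card : ℝ) ≤ A * ε ^ (-m))
    (hs : ∀ x, ∃ c ∈ s, ρ c x ≤ ε) :
    elog (coverNum ρ ε) ≤ ENNReal.ofReal (Real.log A - m * Real.log ε) :=
  calc elog (coverNum ρ ε)
      ≤ elog s.card := elog_mono (coverNum_le_card hs)
    _ ≤ ENNReal.ofReal (Real.log (A * ε ^ (-m))) := elog_natCast_le_ofReal_log hcard
    _ = ENNReal.ofReal (Real.log A - m * Real.log ε) := by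
      rw [Real.log_mul hA.ne' (by positivity), Real.log_rpow hε, neg_mul, sub_eq_add_neg]

theorem elog_coverNum_le_of_le_exp_mul {ρ σ : X → X → ℝ} {A m ε t : ℝ} (hA : 0 < A)
    (hε : 0 < ε) (hσ : ∀ x y, σ x y ≤ Real.exp t * ρ x y) {s : Finset X}
    (hcard : (s.card : ℝ) ≤ A * (ε / Real.exp t) ^ (-m))
    (hs : ∀ x, ∃ c ∈ s, ρ c x ≤ ε / Real.exp t) :
    elog (coverNum σ ε) ≤ ENNReal.ofReal (Real.log A - m * Real.log ε + m * t) :=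
  calc elog (coverNum σ ε)
      ≤ elog (coverNum ρ (ε / Real.exp t)) :=
        elog_mono (coverNum_le_coverNum_div (Real.exp_pos t) hσ ε)
    _ ≤ ENNReal.ofReal (Real.log A - m * Real.log (ε / Real.exp t)) :=
        elog_coverNum_le_of_card_le_mul_rpow hA (by positivity) hcard hs
    _ = ENNReal.ofReal (Real.log A - m * Real.log ε + m * t) := by
      rw [Real.log_div hε.ne' (Real.exp_ne_zero t), Real.log_exp]
      ring_nf

theorem limsup_div_le_of_le_affine {u : ℝ≥0 → ℝ≥0∞} {C k : ℝ}
    (hu : ∀ᶠ r : ℝ≥0 in atTop, u r ≤ ENNReal.ofReal (C + k * r)) :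
    limsup (fun r : ℝ≥0 => u r / r) atTop ≤ ENNReal.ofReal k := by
  have hlim : Tendsto (fun r : ℝ≥0 => ENNReal.ofReal (C / r + k)) atTop
      (𝓝 (ENNReal.ofReal k)) := by
    refine ENNReal.tendsto_ofReal ?_
    simpa using (tendsto_const_nhds.div_atTop (NNReal.tendsto_coe_atTop.2 tendsto_id)).add_const k
  rw [← hlim.limsup_eq]
  refine limsup_le_limsup ?_
  filter_upwards [hu, eventually_gt_atTop 0] with r hur hr
  have hr' : (0 : ℝ) < r := hr
  calc u r / r
      ≤ ENNReal.ofReal (C + k * r) / r := ENNReal.div_le_div_right hur _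
    _ = ENNReal.ofReal ((C + k * r) / r) := by
      rw [ENNReal.ofReal_div_of_pos hr', ENNReal.ofReal_coe_nnreal]
    _ = ENNReal.ofReal (C / r + k) := by
      rw [add_div, mul_div_cancel_right₀ k hr'.ne']

theorem entropy_le_of_elog_coverNum_le_affine {d : ℝ≥0 → X → X → ℝ} {k : ℝ}
    (h : ∀ ε > 0, ∃ C : ℝ, ∀ᶠ r : ℝ≥0 in atTop,
      elog (coverNum (d r) ε) ≤ ENNReal.ofReal (C + k * r)) :
    entropy d ≤ ENNReal.ofReal k := by
  refine iSup₂_le fun ε hε => ?_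
  obtain ⟨C, hC⟩ := h ε hε
  exact limsup_div_le_of_le_affine hC

theorem entropy_le_of_polynomial_cover_general {d : ℝ≥0 → X → X → ℝ} {ρ : X → X → ℝ}
    {A m : ℝ} (hA : 0 < A)
    (hcov : ∃ ε₀ > (0 : ℝ), ∀ ε : ℝ, 0 < ε → ε < ε₀ →
      ∃ s : Finset X, (s.card : ℝ) ≤ A * ε ^ (-m) ∧ ∀ x : X, ∃ c ∈ s, ρ c x ≤ ε)
    {a b : ℝ} (ha : 0 ≤ a)
    (hgrow : ∀ (r : ℝ≥0) (x y : X), d r x y ≤ Real.exp (a * r + b) * ρ x y) :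
    entropy d ≤ ENNReal.ofReal (m * a) := by
  obtain ⟨ε₀, hε₀, hcov⟩ := hcov
  refine entropy_le_of_elog_coverNum_le_affine fun ε hε => ?_
  -- Taking `η < ε₀ e^b` keeps the radius `η / e^{ar+b}` below `ε₀` for every `r`, even if `a = 0`.
  obtain ⟨η, hη, hη_lt⟩ := exists_between (lt_min hε (mul_pos hε₀ (Real.exp_pos b)))
  obtain ⟨hηε, hηε₀⟩ := lt_min_iff.1 hη_lt
  refine ⟨Real.log A - m * Real.log η + m * b, Eventually.of_forall fun r => ?_⟩
  have hexp : Real.exp b ≤ Real.exp (a * r + b) :=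
    Real.exp_le_exp.2 (le_add_of_nonneg_left (by positivity))
  have hradius : η / Real.exp (a * r + b) < ε₀ :=
    (div_lt_iff₀ (Real.exp_pos _)).2 (hηε₀.trans_le (mul_le_mul_of_nonneg_left hexp hε₀.le))
  obtain ⟨s, hcard, hs⟩ := hcov _ (by positivity) hradius
  calc elog (coverNum (d r) ε)
      ≤ elog (coverNum (d r) η) := elog_mono (coverNum_antitone (d r) hηε.le)
    _ ≤ ENNReal.ofReal (Real.log A - m * Real.log η + m * (a * r + b)) :=
        elog_coverNum_le_of_le_exp_mul hA hη (hgrow r) hcard hs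
    _ = ENNReal.ofReal (Real.log A - m * Real.log η + m * b + m * a * r) := by ring_nf

/-- Finiteness criterion: if `X` can be covered by at most `A·ε^{-m}` closed `d`-balls of
radius `ε` for every small `ε > 0`, and `d_λ ≤ e^{aλ+b}·d`, then `h(𝓜,X) ≤ m·a`. -/
theorem entropy_le_of_polynomial_cover [MetricSpace X] [CompactSpace X]
    (d : ℝ≥0 → X → X → ℝ) (hd0 : ∀ x y, d 0 x y = dist x y)
    (hd : IsIncreasingFamily d)
    (A m : ℝ) (hA : 0 < A) (hm : 0 < m)
    (hcov : ∃ ε₀ > (0 : ℝ), ∀ ε : ℝ, 0 < ε → ε < ε₀ →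
      ∃ s : Finset X, (s.card : ℝ) ≤ A * ε ^ (-m) ∧ ∀ x : X, ∃ c ∈ s, dist c x ≤ ε)
    (a b : ℝ) (ha : 0 ≤ a) (hb : 0 ≤ b)
    (hgrow : ∀ (r : ℝ≥0) (x y : X), d r x y ≤ Real.exp (a * r + b) * dist x y) :
    entropy d ≤ ENNReal.ofReal (m * a) :=
  entropy_le_of_polynomial_cover_general hA hcov ha hgrow
end

section
/- Let (X',d') and (X,d) be compact metric spaces, {𝒜'_r}_{r∈[0,∞)} a filtered family of admissible curves on X' and {𝒜_r}_{r∈[0,∞)} a filtered family of admissible curves on X. Let f : X' → X be a surjective map and K > 0 a constant with d(f(a),f(b)) ≤ K·d'(a,b) for all a,b ∈ X', and assume that { f∘γ' : γ' ∈ 𝒜'_r(x') } = 𝒜_r(f(x')) for every r ≥ 0 and every x' ∈ X'. Then for every r > 0 and all x',y' ∈ X': δ_r(f(x'),f(y')) ≤ K·δ'_r(x',y') and d_r(f(x'),f(y')) ≤ K·d'_r(x',y'). -/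
open Filter Topology unitInterval
open scoped ENNReal NNReal

variable {X : Type*}

/-- the curve `t ↦ γ(c·t)` obtained from `γ` by rescaling the parameter by `c ∈ [0,1]`. -/
def rescaleCurve [TopologicalSpace X] (c : unitInterval) (γ : C(unitInterval, X)) :
    C(unitInterval, X) :=
  γ.comp ⟨fun t => c * t,
    Continuous.subtype_mk (continuous_const.mul continuous_subtype_val) _⟩

/-- A filtered family of admissible curves on `X`: `𝒜 0` is the set of constant curves,
every `𝒜 r` contains the constant curves, the family is monotone in `r`, and for
`0 < s < r` every curve of `𝒜 r` can be rescaled into a curve of `𝒜 s`. -/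
structure IsAdmissibleFiltration [TopologicalSpace X]
    (𝒜 : ℝ≥0 → Set C(unitInterval, X)) : Prop where
  zero_eq : 𝒜 0 = {γ | ∃ x : X, γ = ContinuousMap.const unitInterval x}
  const_mem : ∀ (r : ℝ≥0) (x : X), ContinuousMap.const unitInterval x ∈ 𝒜 r
  mono : ∀ ⦃s r : ℝ≥0⦄, s ≤ r → 𝒜 s ⊆ 𝒜 r
  rescale : ∀ ⦃s r : ℝ≥0⦄, 0 < s → s < r → ∀ γ ∈ 𝒜 r,
    ∃ c : unitInterval, rescaleCurve c γ ∈ 𝒜 s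

/-- `𝒜_r(x)`: the curves of `𝒜 r` starting at `x`. -/
def curveSet [TopologicalSpace X] (𝒜 : ℝ≥0 → Set C(unitInterval, X)) (r : ℝ≥0) (x : X) :
    Set C(unitInterval, X) :=
  {γ | γ ∈ 𝒜 r ∧ γ 0 = x}

/-- `δ_r(x,y) = sup_{γ ∈ 𝒜_r(x)} inf_{μ ∈ 𝒜_r(y)} d̄(γ,μ)`, where `d̄` is the uniform
distance on `C([0,1],X)` (which is the distance of the metric space `C([0,1],X)`). -/
noncomputable def deltaR [MetricSpace X] (𝒜 : ℝ≥0 → Set C(unitInterval, X)) (r : ℝ≥0)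
    (x y : X) : ℝ :=
  ⨆ γ : curveSet 𝒜 r x, ⨅ μ : curveSet 𝒜 r y, dist (γ : C(unitInterval, X)) μ

/-- `d_r(x,y) = δ_r(x,y) + δ_r(y,x)`. -/
noncomputable def dR [MetricSpace X] (𝒜 : ℝ≥0 → Set C(unitInterval, X)) (r : ℝ≥0)
    (x y : X) : ℝ :=
  deltaR 𝒜 r x y + deltaR 𝒜 r y x

/-!
`δ_r(x, y)` is the one-sided Hausdorff distance from `𝒜_r(x)` to `𝒜_r(y)` inside `C([0,1], X)`.
Lifting points of `F '' s` to `s` shows that the one-sided distance from `F '' s` to `F '' t` is at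
most `K` times the one from `s` to `t` when `F` is `K`-Lipschitz. Post-composition with a
`K`-Lipschitz map is such an `F` for the uniform distance.
-/

open Set Bornology

section Excess

variable {α β : Type*} [PseudoMetricSpace α] [PseudoMetricSpace β]

/-- The excess of `s` over `t`, i.e. the one-sided Hausdorff distance `sup_{a ∈ s} dist(a, t)`.
Being real-valued, it is meaningful only if these distances are bounded and `t` is nonempty. -/
noncomputable def excess (s t : Set α) : ℝ :=
  ⨆ a : s, Metric.infDist (a : α) t

lemma excess_nonneg (s t : Set α) : 0 ≤ excess s t :=
  Real.iSup_nonneg fun _ => Metric.infDist_nonneg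

lemma infDist_le_excess {s : Set α} (hs : IsBounded s) (t : Set α) {a : α} (ha : a ∈ s) :
    Metric.infDist a t ≤ excess s t := by
  have hbdd : BddAbove (range fun b : s => Metric.infDist (b : α) t) := by
    rw [← image_eq_range (Metric.infDist · t)]
    exact ((Metric.lipschitz_infDist_pt t).isBounded_image hs).bddAbove
  exact le_ciSup hbdd ⟨a, ha⟩

variable {K : ℝ≥0} {F : α → β}

lemma infDist_map_le_mul_infDist (hF : LipschitzWith K F) {t : Set α} {t' : Set β}
    (ht : MapsTo F t t') (hne : t.Nonempty) (a : α) :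
    Metric.infDist (F a) t' ≤ K * Metric.infDist a t := by
  have := hne.to_subtype
  rw [Metric.infDist_eq_iInf (x := a), Real.mul_iInf_of_nonneg K.coe_nonneg]
  exact le_ciInf fun b =>
    (Metric.infDist_le_dist_of_mem (ht b.2)).trans (hF.dist_le_mul a b)

lemma excess_le_mul_excess (hF : LipschitzWith K F) {s t : Set α} {s' t' : Set β}
    (hs : SurjOn F s s') (ht : MapsTo F t t') (hbdd : IsBounded s) (hne : t.Nonempty) :
    excess s' t' ≤ K * excess s t := by
  refine Real.iSup_le ?_ (mul_nonneg K.coe_nonneg (excess_nonneg s t))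
  rintro ⟨_, hb⟩
  obtain ⟨a, ha, rfl⟩ := hs hb
  calc Metric.infDist (F a) t' ≤ K * Metric.infDist a t := infDist_map_le_mul_infDist hF ht hne a
    _ ≤ K * excess s t := by gcongr; exact infDist_le_excess hbdd t ha

end Excess

section ContinuousMap

variable {Y α β : Type*} [TopologicalSpace Y] [CompactSpace Y]
  [PseudoMetricSpace α] [PseudoMetricSpace β]

lemma lipschitzWith_comp_left {K : ℝ≥0} {g : C(α, β)} (hg : LipschitzWith K g) :
    LipschitzWith K (g.comp : C(Y, α) → C(Y, β)) := fun γ μ =>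
  BoundedContinuousFunction.lipschitz_comp hg (.mkOfCompact γ) (.mkOfCompact μ)

instance [BoundedSpace α] : BoundedSpace C(Y, α) where
  bounded_univ := Metric.isBounded_iff.2 ⟨Metric.diam (univ : Set α), fun _ _ _ _ =>
    (ContinuousMap.dist_le Metric.diam_nonneg).2 fun _ =>
      Metric.dist_le_diam_of_mem (.all univ) (mem_univ _) (mem_univ _)⟩

end ContinuousMap

lemma IsAdmissibleFiltration.curveSet_nonempty [TopologicalSpace X]
    {𝒜 : ℝ≥0 → Set C(unitInterval, X)} (h𝒜 : IsAdmissibleFiltration 𝒜) (r : ℝ≥0) (x : X) :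
    (curveSet 𝒜 r x).Nonempty :=
  ⟨.const unitInterval x, h𝒜.const_mem r x, rfl⟩

lemma deltaR_eq_excess [MetricSpace X] (𝒜 : ℝ≥0 → Set C(unitInterval, X)) (r : ℝ≥0) (x y : X) :
    deltaR 𝒜 r x y = excess (curveSet 𝒜 r x) (curveSet 𝒜 r y) := by
  simp only [deltaR, excess, Metric.infDist_eq_iInf]

theorem deltaR_comp_le_general {X' : Type*} [MetricSpace X'] [MetricSpace X]
    {𝒜' : ℝ≥0 → Set C(unitInterval, X')} {𝒜 : ℝ≥0 → Set C(unitInterval, X)} {r : ℝ≥0}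
    (hne : ∀ x', (curveSet 𝒜' r x').Nonempty) (hbdd : ∀ x', IsBounded (curveSet 𝒜' r x'))
    {K : ℝ≥0} {f : C(X', X)} (hf : LipschitzWith K f)
    (himg : ∀ x', f.comp '' curveSet 𝒜' r x' = curveSet 𝒜 r (f x')) (x' y' : X') :
    deltaR 𝒜 r (f x') (f y') ≤ K * deltaR 𝒜' r x' y' ∧
      dR 𝒜 r (f x') (f y') ≤ K * dR 𝒜' r x' y' := by
  have hδ (a b : X') : deltaR 𝒜 r (f a) (f b) ≤ K * deltaR 𝒜' r a b := by
    simp only [deltaR_eq_excess]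
    exact excess_le_mul_excess (lipschitzWith_comp_left hf) (himg a).superset
      (mapsTo_iff_image_subset.2 (himg b).subset) (hbdd a) (hne b)
  refine ⟨hδ x' y', ?_⟩
  rw [dR, dR, mul_add]
  exact add_le_add (hδ x' y') (hδ y' x')

/-- If `f : X' → X` is a surjective `K`-Lipschitz map sending the curve sets `𝒜'_r(x')`
onto `𝒜_r(f x')`, then `δ_r(f x', f y') ≤ K·δ'_r(x',y')` and
`d_r(f x', f y') ≤ K·d'_r(x',y')`. -/
theorem deltaR_comp_le {X' : Type*} [MetricSpace X'] [CompactSpace X']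
    [MetricSpace X] [CompactSpace X]
    (𝒜' : ℝ≥0 → Set C(unitInterval, X')) (𝒜 : ℝ≥0 → Set C(unitInterval, X))
    (h𝒜' : IsAdmissibleFiltration 𝒜') (h𝒜 : IsAdmissibleFiltration 𝒜)
    (f : X' → X) (hsurj : Function.Surjective f)
    (K : ℝ≥0) (hK : 0 < K) (hf : LipschitzWith K f)
    (himg : ∀ (r : ℝ≥0) (x' : X'),
      (fun γ' : C(unitInterval, X') =>
        (ContinuousMap.mk f hf.continuous).comp γ') '' curveSet 𝒜' r x' =
        curveSet 𝒜 r (f x')) :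
    ∀ r : ℝ≥0, 0 < r → ∀ x' y' : X',
      deltaR 𝒜 r (f x') (f y') ≤ K * deltaR 𝒜' r x' y' ∧
      dR 𝒜 r (f x') (f y') ≤ K * dR 𝒜' r x' y' :=
  fun r _ => deltaR_comp_le_general (f := ⟨f, hf.continuous⟩) (h𝒜'.curveSet_nonempty r)
    (fun _ => .all _) hf (himg r)
end

section
/- Let (X,d) be a compact metric space such that there exist positive constants A and m with the property that for every sufficiently small ε > 0, X admits a covering by at most A·ε^{-m} closed d-balls of radius ε. Let f : X → X be a k-Lipschitz map with k ≥ 1, and for n ∈ ℕ define the Bowen metric d_n(x,y) = max_{0 ≤ i ≤ n} d(f^i(x), f^i(y)). Then {d_n}_{n∈ℕ} is an increasing family of distances on X and its entropy (the topological entropy of f) satisfies h({d_n},X) ≤ m·log k; in particular the topological entropy of f is finite. -/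
open Filter Topology
open scoped ENNReal NNReal

variable {X : Type*}

/-- entropy of an `ℕ`-indexed family of distances:
`sup_{ε>0} limsup_{n→∞} (1/n) log M(d_n,ε)`. -/
noncomputable def entropyNat (d : ℕ → X → X → ℝ) : ℝ≥0∞ :=
  ⨆ (ε : ℝ) (_ : 0 < ε),
    Filter.limsup (fun n : ℕ => elog (coverNum (d n) ε) / (n : ℝ≥0∞)) Filter.atTop

/-- an `ℕ`-indexed increasing family of distances. -/
def IsIncreasingFamilyNat (d : ℕ → X → X → ℝ) : Prop :=
  (∀ n, IsMetric (d n)) ∧ ∀ ⦃n n' : ℕ⦄, n ≤ n' → ∀ x y, d n x y ≤ d n' x y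

/-- the Bowen metric `d_n(x,y) = max_{0 ≤ i ≤ n} d(fⁱ x, fⁱ y)` of a map `f : X → X`. -/
noncomputable def bowenDist [MetricSpace X] (f : X → X) (n : ℕ) (x y : X) : ℝ :=
  (Finset.range (n + 1)).sup' (Finset.nonempty_range_iff.mpr (Nat.succ_ne_zero n))
    (fun i => dist (f^[i] x) (f^[i] y))

/-!
One iteration of a `k`-Lipschitz map expands distances by a factor at most `K = max 1 k`, so a
`d`-ball of radius `δ / Kⁿ` lies in the Bowen ball `{y | d_n(x, y) ≤ δ}`. Hence `X` is covered by at
most `A (Kⁿ / δ)ᵐ` Bowen balls of radius `δ`; for fixed `δ`, the logarithm of this number is affine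
in `n` with slope `m log K = m log⁺ k`.
-/

section BowenDist

variable [MetricSpace X] {f : X → X} {n : ℕ} {x y : X}

theorem bowenDist_le_iff {r : ℝ} :
    bowenDist f n x y ≤ r ↔ ∀ i ≤ n, dist (f^[i] x) (f^[i] y) ≤ r := by
  simp only [bowenDist, Finset.sup'_le_iff, Finset.mem_range, Nat.lt_succ_iff]

theorem dist_iterate_le_bowenDist {i : ℕ} (hi : i ≤ n) :
    dist (f^[i] x) (f^[i] y) ≤ bowenDist f n x y :=
  bowenDist_le_iff.mp le_rfl i hi

theorem bowenDist_zero (f : X → X) (x y : X) : bowenDist f 0 x y = dist x y := by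
  simp [bowenDist]

theorem bowenDist_mono {n' : ℕ} (h : n ≤ n') : bowenDist f n x y ≤ bowenDist f n' x y :=
  bowenDist_le_iff.mpr fun _ hi => dist_iterate_le_bowenDist (hi.trans h)

theorem isMetric_bowenDist (f : X → X) (n : ℕ) : IsMetric (bowenDist f n) := by
  refine ⟨fun x y => ⟨fun h => ?_, ?_⟩, fun x y => ?_, fun x y z => ?_⟩
  · exact dist_le_zero.mp (h ▸ dist_iterate_le_bowenDist n.zero_le)
  · rintro rfl
    simp [bowenDist]
  · simp only [bowenDist, dist_comm]
  · exact bowenDist_le_iff.mpr fun i hi => (dist_triangle _ (f^[i] y) _).trans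
      (add_le_add (dist_iterate_le_bowenDist hi) (dist_iterate_le_bowenDist hi))

theorem isIncreasingFamilyNat_bowenDist (f : X → X) : IsIncreasingFamilyNat (bowenDist f) :=
  ⟨isMetric_bowenDist f, fun _ _ h _ _ => bowenDist_mono h⟩

theorem bowenDist_le_pow_mul_dist {k : ℝ≥0} (hf : LipschitzWith k f) (n : ℕ) (x y : X) :
    bowenDist f n x y ≤ max 1 (k : ℝ) ^ n * dist x y := by
  refine bowenDist_le_iff.mpr fun i hi => ?_
  calc
    dist (f^[i] x) (f^[i] y) ≤ (k : ℝ) ^ i * dist x y := by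
      simpa only [NNReal.coe_pow] using (hf.iterate i).dist_le_mul x y
    _ ≤ max 1 (k : ℝ) ^ i * dist x y := by gcongr; exact le_max_right _ _
    _ ≤ max 1 (k : ℝ) ^ n * dist x y := by gcongr; exact le_max_left _ _

end BowenDist

theorem coverNum_bowenDist_le [MetricSpace X] {f : X → X} {k : ℝ≥0} (hf : LipschitzWith k f)
    (n : ℕ) (δ : ℝ) :
    coverNum (bowenDist f n) δ ≤ coverNum (dist : X → X → ℝ) (δ / max 1 (k : ℝ) ^ n) := by
  refine coverNum_le_coverNum fun x y hxy => (bowenDist_le_pow_mul_dist hf n x y).trans ?_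
  rwa [← le_div_iff₀' (by positivity)]

theorem elog_le_ofReal_log {n : ℕ∞} {N : ℕ} {B : ℝ} (hn : n ≤ N) (hN : (N : ℝ) ≤ B) :
    elog n ≤ ENNReal.ofReal (Real.log B) := by
  lift n to ℕ using ne_top_of_le_ne_top (ENat.natCast_ne_top N) hn
  have hnB : (n : ℝ) ≤ B := (Nat.cast_le.mpr (Nat.cast_le.mp hn)).trans hN
  rw [elog, if_neg (ENat.natCast_ne_top n), ENat.toNat_natCast]
  obtain rfl | hpos := n.eq_zero_or_pos
  · simp
  · exact ENNReal.ofReal_le_ofReal (Real.log_le_log (Nat.cast_pos.mpr hpos) hnB)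

theorem entropyNat_le_ofReal_of_elog_coverNum_le {d : ℕ → X → X → ℝ} {L : ℝ}
    (h : ∀ ε > 0, ∃ C : ℝ, ∀ n : ℕ, elog (coverNum (d n) ε) ≤ ENNReal.ofReal (C + n * L)) :
    entropyNat d ≤ ENNReal.ofReal L := by
  refine iSup₂_le fun ε hε => ?_
  obtain ⟨C, hC⟩ := h ε hε
  have hbound : ∀ᶠ n : ℕ in atTop,
      elog (coverNum (d n) ε) / (n : ℝ≥0∞) ≤ ENNReal.ofReal (C / n + L) := by
    filter_upwards [eventually_gt_atTop 0] with n hn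
    have hn' : (0 : ℝ) < n := Nat.cast_pos.mpr hn
    calc
      elog (coverNum (d n) ε) / n ≤ ENNReal.ofReal (C + n * L) / n :=
        ENNReal.div_le_div_right (hC n) _
      _ = ENNReal.ofReal ((C + n * L) / n) := by
        rw [ENNReal.ofReal_div_of_pos hn', ENNReal.ofReal_natCast]
      _ = ENNReal.ofReal (C / n + L) := by rw [add_div, mul_div_cancel_left₀ L hn'.ne']
  have hlim : Tendsto (fun n : ℕ => ENNReal.ofReal (C / n + L)) atTop
      (𝓝 (ENNReal.ofReal L)) :=
    ENNReal.tendsto_ofReal <| by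
      simpa only [zero_add] using (tendsto_const_div_atTop_nhds_zero_nat C).add_const L
  exact (limsup_le_limsup hbound).trans hlim.limsup_eq.le

theorem log_mul_div_pow_rpow_neg {A δ K : ℝ} (hA : 0 < A) (hδ : 0 < δ) (hK : 0 < K) (m : ℝ)
    (n : ℕ) :
    Real.log (A * (δ / K ^ n) ^ (-m)) =
      Real.log A - m * Real.log δ + n * (m * Real.log K) := by
  have hr : 0 < δ / K ^ n := by positivity
  rw [Real.log_mul hA.ne' (Real.rpow_pos_of_pos hr _).ne', Real.log_rpow hr,
    Real.log_div hδ.ne' (pow_pos hK n).ne', Real.log_pow]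
  ring

theorem topologicalEntropy_le_of_lipschitz_general [MetricSpace X] (A m : ℝ) (hA : 0 < A)
    (hcov : ∃ ε₀ > (0 : ℝ), ∀ ε : ℝ, 0 < ε → ε < ε₀ →
      ∃ s : Finset X, (s.card : ℝ) ≤ A * ε ^ (-m) ∧ ∀ x : X, ∃ c ∈ s, dist c x ≤ ε)
    (f : X → X) (k : ℝ≥0) (hf : LipschitzWith k f) :
    IsIncreasingFamilyNat (bowenDist f) ∧
    (∀ x y, bowenDist f 0 x y = dist x y) ∧
    entropyNat (bowenDist f) ≤ ENNReal.ofReal (m * Real.posLog k) ∧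
    entropyNat (bowenDist f) < ⊤ := by
  suffices h : entropyNat (bowenDist f) ≤ ENNReal.ofReal (m * Real.posLog k) from
    ⟨isIncreasingFamilyNat_bowenDist f, bowenDist_zero f, h, h.trans_lt ENNReal.ofReal_lt_top⟩
  obtain ⟨ε₀, hε₀, hcov⟩ := hcov
  refine entropyNat_le_ofReal_of_elog_coverNum_le fun ε hε => ?_
  obtain ⟨δ, hδ, hδlt⟩ := exists_between (lt_min hε hε₀)
  obtain ⟨hδε, hδε₀⟩ := lt_min_iff.mp hδlt
  refine ⟨Real.log A - m * Real.log δ, fun n => ?_⟩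
  have hK : 1 ≤ max 1 (k : ℝ) := le_max_left _ _
  obtain ⟨s, hcard, hs⟩ := hcov (δ / max 1 (k : ℝ) ^ n) (by positivity)
    ((div_le_self hδ.le (one_le_pow₀ hK)).trans_lt hδε₀)
  have hcover : coverNum (bowenDist f n) ε ≤ s.card :=
    calc
      coverNum (bowenDist f n) ε ≤ coverNum (bowenDist f n) δ :=
        coverNum_le_coverNum fun _ _ h => h.trans hδε.le
      _ ≤ coverNum dist (δ / max 1 (k : ℝ) ^ n) := coverNum_bowenDist_le hf n δ
      _ ≤ s.card := coverNum_le_card hs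
  rw [Real.posLog_eq_log_max_one k.coe_nonneg,
    ← log_mul_div_pow_rpow_neg hA hδ (zero_lt_one.trans_le hK)]
  exact elog_le_ofReal_log hcover hcard

/-- For a `k`-Lipschitz map `f` (`k ≥ 1`) on a compact metric space admitting coverings by
at most `A·ε^{-m}` balls of radius `ε`, the Bowen metrics form an increasing family of
distances whose entropy (the topological entropy of `f`) is at most `m·log k`; in
particular it is finite. -/
theorem topologicalEntropy_le_of_lipschitz [MetricSpace X] [CompactSpace X]
    (A m : ℝ) (hA : 0 < A) (hm : 0 < m)
    (hcov : ∃ ε₀ > (0 : ℝ), ∀ ε : ℝ, 0 < ε → ε < ε₀ →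
      ∃ s : Finset X, (s.card : ℝ) ≤ A * ε ^ (-m) ∧ ∀ x : X, ∃ c ∈ s, dist c x ≤ ε)
    (f : X → X) (k : ℝ≥0) (hk : 1 ≤ k) (hf : LipschitzWith k f) :
    IsIncreasingFamilyNat (bowenDist f) ∧
    (∀ x y, bowenDist f 0 x y = dist x y) ∧
    entropyNat (bowenDist f) ≤ ENNReal.ofReal (m * Real.log k) ∧
    entropyNat (bowenDist f) < ⊤ := by
  have hlog : Real.posLog k = Real.log k := Real.posLog_eq_log (by simpa using hk)
  exact hlog ▸ topologicalEntropy_le_of_lipschitz_general A m hA hcov f k hf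
end
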